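/- arXiv:2503.11454 — 2 statements merged into one kernel-verified Lean document; each statement's English description precedes it below -/
import Mathlib

section
/- Let p, q ∈ ℝ³ with |p| = |q| = 1, and let P = (1/2)(I₂ + Σᵢ pᵢσᵢ), Q = (1/2)(I₂ + Σᵢ qᵢσᵢ). Let θ ∈ ℝ⁴ with θᵢ ≥ 0 and Σθᵢ = 1, and let ρ(θ) = Σᵢ θᵢ Pᵢ be the corresponding Bell diagonal state. Then the (real) number Tr[(P⊗Q) ρ(θ)] is at most 1/2. -/
open Matrix Kronecker

/-- The four Bell states as vectors in `ℂ² ⊗ ℂ²` (indexed by `Fin 2 × Fin 2`). -/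
noncomputable def bell : Fin 4 → (Fin 2 × Fin 2) → ℂ :=
  ![fun p => (if p = (0,0) then 1 else if p = (1,1) then 1 else 0) / (Real.sqrt 2 : ℂ),
    fun p => (if p = (0,0) then 1 else if p = (1,1) then -1 else 0) / (Real.sqrt 2 : ℂ),
    fun p => (if p = (0,1) then 1 else if p = (1,0) then 1 else 0) / (Real.sqrt 2 : ℂ),
    fun p => (if p = (0,1) then 1 else if p = (1,0) then -1 else 0) / (Real.sqrt 2 : ℂ)]

/-- The rank-one projector `|Ψᵢ⟩⟨Ψᵢ|` onto the `i`-th Bell state. -/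
noncomputable def bellProj (i : Fin 4) : Matrix (Fin 2 × Fin 2) (Fin 2 × Fin 2) ℂ :=
  Matrix.vecMulVec (bell i) (star (bell i))

/-- The three Pauli matrices `σ₁, σ₂, σ₃`. -/
def pauliσ : Fin 3 → Matrix (Fin 2) (Fin 2) ℂ :=
  ![!![0, 1; 1, 0], !![0, -Complex.I; Complex.I, 0], !![1, 0; 0, -1]]

/-! The Bell projectors are diagonal in the Pauli basis: the projector onto the `k`-th Bell state is
`(I ⊗ I + ∑ i, s i • σᵢ ⊗ σᵢ) / 4` with signs `s i = ±1`. Trace orthogonality of the Pauli matrices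
then turns the overlap of `P ⊗ Q` with it into `(1 + ∑ i, s i * p i * q i) / 4`. Changing signs of
coordinates preserves the norm, so by Cauchy-Schwarz each overlap is at most `(1 + ‖p‖ * ‖q‖) / 4`,
and `ρ(θ)` averages the four overlaps. -/

/-- The matrix `(I + p₁σ₁ + p₂σ₂ + p₃σ₃) / 2` with Bloch vector `p`: a rank-one projector when
`‖p‖ = 1`, a density matrix when `‖p‖ ≤ 1`. -/
noncomputable def blochMatrix (p : EuclideanSpace ℝ (Fin 3)) : Matrix (Fin 2) (Fin 2) ℂ :=
  (1 / 2 : ℂ) • (1 + ∑ i, (p i : ℂ) • pauliσ i)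

/-- The Bell diagonal matrix `ρ(θ)`; it is a state when `θ` is a probability vector. -/
noncomputable def bellDiagonal (θ : Fin 4 → ℝ) : Matrix (Fin 2 × Fin 2) (Fin 2 × Fin 2) ℂ :=
  ∑ k, (θ k : ℂ) • bellProj k

/-- The correlation signs of the Bell states: `bellSign k i` is the eigenvalue of `σᵢ ⊗ σᵢ` at the
`k`-th Bell state. -/
def bellSign : Fin 4 → Fin 3 → ℝ :=
  ![![1, -1, 1], ![-1, 1, 1], ![1, 1, -1], ![-1, -1, -1]]

lemma abs_bellSign (k : Fin 4) (i : Fin 3) : |bellSign k i| = 1 := by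
  fin_cases k <;> fin_cases i <;> simp [bellSign]

lemma trace_pauliσ (i : Fin 3) : (pauliσ i).trace = 0 := by
  fin_cases i <;> simp [pauliσ, trace_fin_two]

lemma trace_pauliσ_mul_pauliσ (i j : Fin 3) :
    (pauliσ i * pauliσ j).trace = if i = j then 2 else 0 := by
  fin_cases i <;> fin_cases j <;> norm_num [pauliσ, trace_fin_two]

lemma trace_blochMatrix (p : EuclideanSpace ℝ (Fin 3)) : (blochMatrix p).trace = 1 := by
  simp [blochMatrix, trace_sum, trace_pauliσ]

lemma trace_blochMatrix_mul_pauliσ (p : EuclideanSpace ℝ (Fin 3)) (i : Fin 3) :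
    (blochMatrix p * pauliσ i).trace = p i := by
  simp [blochMatrix, add_mul, Finset.sum_mul, trace_sum, trace_pauliσ, trace_pauliσ_mul_pauliσ,
    mul_comm (2⁻¹ : ℂ)]

lemma bellProj_eq_sum_kronecker_pauliσ (k : Fin 4) :
    bellProj k = (1 / 4 : ℂ) • (1 ⊗ₖ 1 + ∑ i, (bellSign k i : ℂ) • (pauliσ i ⊗ₖ pauliσ i)) := by
  have inv_sqrt_two_sq : (√2 : ℂ)⁻¹ * (√2 : ℂ)⁻¹ = 1 / 2 := by
    rw [← mul_inv, ← Complex.ofReal_mul, Real.mul_self_sqrt zero_le_two]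
    norm_num
  fin_cases k <;> ext ⟨a, b⟩ ⟨c, d⟩ <;> revert a b c d <;>
    norm_num [Fin.forall_fin_two, bellProj, bell, bellSign, pauliσ, vecMulVec_apply,
      Fin.sum_univ_succ, one_apply, div_eq_mul_inv, inv_sqrt_two_sq]

lemma trace_kronecker_mul_bellProj (A B : Matrix (Fin 2) (Fin 2) ℂ) (k : Fin 4) :
    ((A ⊗ₖ B) * bellProj k).trace = 1 / 4 * (A.trace * B.trace +
      ∑ i, bellSign k i * ((A * pauliσ i).trace * (B * pauliσ i).trace)) := by
  simp only [bellProj_eq_sum_kronecker_pauliσ, mul_smul_comm, mul_add, Finset.mul_sum,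
    ← mul_kronecker_mul, trace_smul, trace_add, trace_sum, trace_kronecker, mul_one, smul_eq_mul]

lemma trace_kronecker_blochMatrix_mul_bellDiagonal (p q : EuclideanSpace ℝ (Fin 3))
    (θ : Fin 4 → ℝ) :
    ((blochMatrix p ⊗ₖ blochMatrix q) * bellDiagonal θ).trace =
      ((∑ k, θ k * (1 / 4 * (1 + ∑ i, bellSign k i * (p i * q i))) : ℝ) : ℂ) := by
  simp [bellDiagonal, Finset.mul_sum, trace_sum, trace_kronecker_mul_bellProj, trace_blochMatrix,
    trace_blochMatrix_mul_pauliσ]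

lemma sum_mul_mul_le_norm_mul_norm {ι : Type*} [Fintype ι] {s : ι → ℝ} (hs : ∀ i, |s i| ≤ 1)
    (x y : EuclideanSpace ℝ ι) : ∑ i, s i * (x i * y i) ≤ ‖x‖ * ‖y‖ := by
  have term_le (i : ι) : s i * (x i * y i) ≤ ‖x i‖ * ‖y i‖ :=
    calc s i * (x i * y i) ≤ |s i * (x i * y i)| := le_abs_self _
      _ = |s i| * (‖x i‖ * ‖y i‖) := by simp [abs_mul]
      _ ≤ ‖x i‖ * ‖y i‖ := mul_le_of_le_one_left (by positivity) (hs i)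
  calc ∑ i, s i * (x i * y i)
      ≤ ∑ i, ‖x i‖ * ‖y i‖ := Finset.sum_le_sum fun i _ ↦ term_le i
    _ ≤ √(∑ i, ‖x i‖ ^ 2) * √(∑ i, ‖y i‖ ^ 2) := Real.sum_mul_le_sqrt_mul_sqrt _ _ _
    _ = ‖x‖ * ‖y‖ := by rw [EuclideanSpace.norm_eq, EuclideanSpace.norm_eq]

theorem trace_separable_on_bell_diagonal_le_half_general (p q : EuclideanSpace ℝ (Fin 3))
    {θ : Fin 4 → ℝ} (hθ : ∀ k, 0 ≤ θ k) :
    ((blochMatrix p ⊗ₖ blochMatrix q) * bellDiagonal θ).trace.im = 0 ∧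
      ((blochMatrix p ⊗ₖ blochMatrix q) * bellDiagonal θ).trace.re ≤
        (∑ k, θ k) * (1 / 4 * (1 + ‖p‖ * ‖q‖)) := by
  rw [trace_kronecker_blochMatrix_mul_bellDiagonal, Complex.ofReal_re, Finset.sum_mul]
  refine ⟨Complex.ofReal_im _, Finset.sum_le_sum fun k _ ↦ mul_le_mul_of_nonneg_left ?_ (hθ k)⟩
  gcongr
  exact sum_mul_mul_le_norm_mul_norm (fun i ↦ (abs_bellSign k i).le) p q

/-- For rank-one projectors `P, Q` with unit Bloch vectors `p, q` and a Bell diagonal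
state `ρ(θ)`, the number `Tr[(P⊗Q)ρ(θ)]` is real and at most `1/2`. -/
theorem trace_separable_on_bell_diagonal_le_half
    (p q : Fin 3 → ℝ) (hp : p 0 ^ 2 + p 1 ^ 2 + p 2 ^ 2 = 1)
    (hq : q 0 ^ 2 + q 1 ^ 2 + q 2 ^ 2 = 1)
    (θ : Fin 4 → ℝ) (hθ : ∀ i, 0 ≤ θ i) (hsum : ∑ i, θ i = 1) :
    (((((1/2 : ℂ) • ((1 : Matrix (Fin 2) (Fin 2) ℂ) + ∑ i : Fin 3, (p i : ℂ) • pauliσ i))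
        ⊗ₖ ((1/2 : ℂ) • ((1 : Matrix (Fin 2) (Fin 2) ℂ) + ∑ i : Fin 3, (q i : ℂ) • pauliσ i)))
      * (∑ i : Fin 4, (θ i : ℂ) • bellProj i)).trace.im = 0)
    ∧ (((((1/2 : ℂ) • ((1 : Matrix (Fin 2) (Fin 2) ℂ) + ∑ i : Fin 3, (p i : ℂ) • pauliσ i))
        ⊗ₖ ((1/2 : ℂ) • ((1 : Matrix (Fin 2) (Fin 2) ℂ) + ∑ i : Fin 3, (q i : ℂ) • pauliσ i)))
      * (∑ i : Fin 4, (θ i : ℂ) • bellProj i)).trace.re ≤ 1/2) := by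
  refine (trace_separable_on_bell_diagonal_le_half_general (.toLp 2 p) (.toLp 2 q) hθ).imp_right
    fun hre ↦ hre.trans_eq ?_
  norm_num [EuclideanSpace.norm_eq, Fin.sum_univ_three, hp, hq, hsum]
end

section
/- Let N be a positive multiple of 3, m = N/3, and θ ∈ ℝ⁴ with θᵢ ≥ 0 and Σθᵢ = 1, with Pauli parameters t₁ = θ₁−θ₂+θ₃−θ₄, t₂ = −θ₁+θ₂+θ₃−θ₄, t₃ = θ₁+θ₂−θ₃−θ₄. Let X₁, X₂, X₃ be independent with Xᵢ binomially distributed with m trials and success probability (1+tᵢ)/2, and define the adjusted Bayesian mean estimator t̂ᵢ = (2Xᵢ − m)/(m + 2). Then the Hilbert–Schmidt risk (1/4) Σᵢ₌₁³ E[(t̂ᵢ − tᵢ)²] equals [m − 1 + (4 − m) Σᵢ₌₁⁴ θᵢ²] / (m + 2)². Moreover, the average of this risk over the uniform prior on the probability simplex equals (N+3)/(5(m+2)²), which upper-bounds the average Hilbert–Schmidt risk of the Bayesian mean estimator for N ordered Pauli parity checks under the uniform prior. -/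
open MeasureTheory

/-- Coordinates on the probability simplex: `(θ₁,θ₂,θ₃) ↦ (θ₁,θ₂,θ₃,1−θ₁−θ₂−θ₃)`. -/
def simplexCoord (y : Fin 3 → ℝ) : Fin 4 → ℝ :=
  ![y 0, y 1, y 2, 1 - y 0 - y 1 - y 2]

/-- The coordinate patch of the probability simplex. -/
def simplexSet : Set (Fin 3 → ℝ) :=
  {y | (∀ j, 0 ≤ y j) ∧ y 0 + y 1 + y 2 ≤ 1}

/-- Pauli parameters `t` of the Bell diagonal state with eigenvalues `θ`. -/
def pauliParams (θ : Fin 4 → ℝ) : Fin 3 → ℝ :=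
  ![θ 0 - θ 1 + θ 2 - θ 3, -θ 0 + θ 1 + θ 2 - θ 3, θ 0 + θ 1 - θ 2 - θ 3]

/-- Probability of observing `x i` even-parity outcomes out of `m` Pauli parity checks
in each basis `i` on the Bell diagonal state with eigenvalues `θ`. -/
noncomputable def parityLikelihood (m : ℕ) (x : Fin 3 → Fin (m + 1)) (θ : Fin 4 → ℝ) : ℝ :=
  ∏ i, (m.choose (x i) : ℝ) * ((1 + pauliParams θ i) / 2) ^ (x i : ℕ) *
    ((1 - pauliParams θ i) / 2) ^ (m - (x i : ℕ))

/-- The Bayesian mean estimate of `θᵢ` from the parity-check data `x`, under the uniform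
prior on the (physical) probability simplex. -/
noncomputable def bmeEstimate (m : ℕ) (x : Fin 3 → Fin (m + 1)) (i : Fin 4) : ℝ :=
  (∫ y in simplexSet, simplexCoord y i * parityLikelihood m x (simplexCoord y)) /
    (∫ y in simplexSet, parityLikelihood m x (simplexCoord y))

/-!
Up to the total mass, the Pauli parameters are the Hadamard transform of the eigenvalues, so by
Parseval the Hilbert–Schmidt error is a quarter of the squared error in `t`. The three bases
decouple, and in each of them the second moments of a binomial variable give the risk
`(m (1 - t²) + 4 t²) / (m + 2)²`. Its average over the simplex is determined by the moments of order
at most two of the uniform distribution, which are Dirichlet integrals. The Bayesian mean estimate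
minimizes the posterior expected squared error of each eigenvalue for each outcome `x`, so its
average risk is at most that of any other estimator, in particular of the adjusted one.
-/

/-- The right-hand side is the variance plus the squared mean of `a X + b` for `X` binomial. -/
theorem sum_bernsteinPolynomial_eval_mul_affine_sq {R : Type*} [CommRing R] (n : ℕ) (p a b : R) :
    ∑ k ∈ Finset.range (n + 1), (bernsteinPolynomial R n k).eval p * (a * k + b) ^ 2 =
      a ^ 2 * (n * p * (1 - p)) + (a * (n * p) + b) ^ 2 := by
  have total := congrArg (Polynomial.eval p) (bernsteinPolynomial.sum R n)
  have mean := congrArg (Polynomial.eval p) (bernsteinPolynomial.sum_smul R n)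
  have variance := congrArg (Polynomial.eval p) (bernsteinPolynomial.variance R n)
  simp only [Polynomial.eval_finsetSum, Polynomial.eval_mul, Polynomial.eval_pow,
    Polynomial.eval_sub, Polynomial.eval_X, Polynomial.eval_one, Polynomial.eval_natCast,
    nsmul_eq_mul] at total mean variance
  have expand (k : ℕ) : (bernsteinPolynomial R n k).eval p * (a * k + b) ^ 2 =
      a ^ 2 * ((n * p - k) ^ 2 * (bernsteinPolynomial R n k).eval p) +
        2 * a * (a * (n * p) + b) * (k * (bernsteinPolynomial R n k).eval p) +
        (b ^ 2 - (a * (n * p)) ^ 2) * (bernsteinPolynomial R n k).eval p := by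
    ring
  simp only [expand, Finset.sum_add_distrib, ← Finset.mul_sum, total, mean, variance]
  ring

section ProductWeights

variable {ι R : Type*} [Fintype ι] [DecidableEq ι] [CommSemiring R] {κ : ι → Type*}
  [∀ i, Fintype (κ i)] {w : ∀ i, κ i → R}

theorem sum_prod_mul_apply_eq (hw : ∀ i, ∑ k, w i k = 1) (j : ι) (g : κ j → R) :
    ∑ x : ∀ i, κ i, (∏ i, w i (x i)) * g (x j) = ∑ k, w j k * g k := by
  let v : ∀ i, κ i → R := Function.update w j fun k => w j k * g k
  have v_self : v j = fun k => w j k * g k := Function.update_self ..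
  have v_of_ne {i : ι} (hi : i ≠ j) : v i = w i := Function.update_of_ne hi ..
  calc ∑ x : ∀ i, κ i, (∏ i, w i (x i)) * g (x j)
      = ∑ x : ∀ i, κ i, ∏ i, v i (x i) := by
        refine Finset.sum_congr rfl fun x _ => ?_
        rw [← Finset.mul_prod_erase _ _ (Finset.mem_univ j),
          ← Finset.mul_prod_erase _ (fun i => v i (x i)) (Finset.mem_univ j), v_self,
          Finset.prod_congr rfl fun i hi => congrFun (v_of_ne (Finset.ne_of_mem_erase hi)) (x i)]
        ring
    _ = ∏ i, ∑ k, v i k := (Fintype.prod_sum v).symm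
    _ = ∑ k, w j k * g k := by
        rw [Finset.prod_eq_single_of_mem j (Finset.mem_univ j) fun i _ hi => by
          rw [v_of_ne hi, hw], v_self]

theorem sum_prod_mul_sum_apply_eq (hw : ∀ i, ∑ k, w i k = 1) (g : ∀ i, κ i → R) :
    ∑ x : ∀ i, κ i, (∏ i, w i (x i)) * ∑ j, g j (x j) = ∑ j, ∑ k, w j k * g j k := by
  simp only [Finset.mul_sum]
  rw [Finset.sum_comm]
  exact Finset.sum_congr rfl fun j _ => sum_prod_mul_apply_eq hw j (g j)

end ProductWeights

section WeightedLeastSquares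

variable {α : Type*} [MeasurableSpace α] {μ : Measure α} {w f : α → ℝ}

theorem integral_mul_const_sub_sq (hw : Integrable w μ) (hfw : Integrable (fun x => f x * w x) μ)
    (hffw : Integrable (fun x => f x ^ 2 * w x) μ) (a : ℝ) :
    ∫ x, w x * (a - f x) ^ 2 ∂μ =
      a ^ 2 * ∫ x, w x ∂μ - 2 * a * ∫ x, f x * w x ∂μ + ∫ x, f x ^ 2 * w x ∂μ := by
  have h_sub : Integrable (fun x => a ^ 2 * w x - 2 * a * (f x * w x)) μ :=
    (hw.const_mul _).sub (hfw.const_mul _)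
  rw [← integral_const_mul, ← integral_const_mul,
    ← integral_sub (hw.const_mul _) (hfw.const_mul _), ← integral_add h_sub hffw]
  congr 1 with x
  ring

theorem integral_mul_weightedMean_sub_sq_le (hw_nonneg : 0 ≤ᵐ[μ] w) (hw : Integrable w μ)
    (hfw : Integrable (fun x => f x * w x) μ) (hffw : Integrable (fun x => f x ^ 2 * w x) μ)
    (a : ℝ) :
    ∫ x, w x * ((∫ z, f z * w z ∂μ) / (∫ z, w z ∂μ) - f x) ^ 2 ∂μ ≤
      ∫ x, w x * (a - f x) ^ 2 ∂μ := by
  rcases (integral_nonneg_of_ae hw_nonneg).eq_or_lt' with mass_zero | mass_pos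
  -- Here the weighted mean is the junk value `0`, but `w` vanishes almost everywhere.
  · have w_zero : w =ᵐ[μ] 0 := (integral_eq_zero_iff_of_nonneg_ae hw_nonneg hw).1 mass_zero
    refine (integral_congr_ae ?_).le
    filter_upwards [w_zero] with x hx
    simp only [hx, Pi.zero_apply, zero_mul]
  · rw [integral_mul_const_sub_sq hw hfw hffw, integral_mul_const_sub_sq hw hfw hffw]
    set D := ∫ x, w x ∂μ
    set M := ∫ x, f x * w x ∂μ
    have gap : a ^ 2 * D - 2 * a * M - ((M / D) ^ 2 * D - 2 * (M / D) * M) =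
        (a - M / D) ^ 2 * D := by
      field_simp
      ring
    have := mul_nonneg (sq_nonneg (a - M / D)) mass_pos.le
    linarith

end WeightedLeastSquares

section DirichletIntegral

open scoped Nat

theorem integral_pow_mul_sub_pow (p q : ℕ) (u : ℝ) :
    ∫ x in (0 : ℝ)..u, x ^ p * (u - x) ^ q =
      (p ! * q ! / (p + q + 1)! : ℝ) * u ^ (p + q + 1) := by
  induction p generalizing q with
  | zero =>
    simp only [pow_zero, one_mul, zero_add, Nat.factorial_zero, Nat.cast_one]
    rw [intervalIntegral.integral_comp_sub_left (fun x => x ^ q) u, sub_self, sub_zero,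
      integral_pow, Nat.factorial_succ]
    push_cast
    field_simp
    ring
  | succ p ih =>
    have antideriv (x : ℝ) : HasDerivAt (fun x : ℝ => x ^ (p + 1) * (u - x) ^ (q + 1))
        ((p + 1) * (x ^ p * (u - x) ^ (q + 1)) - (q + 1) * (x ^ (p + 1) * (u - x) ^ q)) x := by
      refine ((hasDerivAt_pow (p + 1) x).fun_mul
        (((hasDerivAt_id' x).const_sub u).fun_pow (q + 1))).congr_deriv ?_
      simp only [Nat.add_sub_cancel]
      push_cast
      ring
    have by_parts := intervalIntegral.integral_eq_sub_of_hasDerivAt (fun x _ => antideriv x)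
      ((by fun_prop : Continuous _).intervalIntegrable 0 u)
    rw [intervalIntegral.integral_sub ((by fun_prop : Continuous _).intervalIntegrable 0 u)
      ((by fun_prop : Continuous _).intervalIntegrable 0 u),
      intervalIntegral.integral_const_mul, intervalIntegral.integral_const_mul, ih,
      sub_self, zero_pow q.succ_ne_zero, zero_pow p.succ_ne_zero, mul_zero, zero_mul, sub_zero,
      show p + (q + 1) + 1 = p + 1 + q + 1 by ring] at by_parts
    rw [← mul_right_inj' (Nat.cast_add_one_ne_zero q : (q + 1 : ℝ) ≠ 0),
      ← sub_eq_zero.1 by_parts, Nat.factorial_succ p, Nat.factorial_succ q]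
    push_cast
    ring

/-- The simplex cut off from the positive orthant by `∑ i, y i = u`: the projection to `ℝ^ι` of
the simplex of nonnegative vectors of total `u` indexed by `Option ι`. -/
def cornerSimplex (ι : Type*) [Fintype ι] (u : ℝ) : Set (ι → ℝ) :=
  {y | (∀ i, 0 ≤ y i) ∧ ∑ i, y i ≤ u}

theorem isCompact_cornerSimplex (ι : Type*) [Fintype ι] (u : ℝ) :
    IsCompact (cornerSimplex ι u) := by
  refine isCompact_Icc.of_isClosed_subset (s := Set.Icc 0 fun _ => u) ?_ fun y hy =>
    ⟨hy.1, fun i => (Finset.single_le_sum (fun j _ => hy.1 j) (Finset.mem_univ i)).trans hy.2⟩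
  simp only [cornerSimplex, Set.ofPred_and, Set.ofPred_forall]
  exact (isClosed_iInter fun i => isClosed_le (by fun_prop) (by fun_prop)).inter
    (isClosed_le (by fun_prop) (by fun_prop))

theorem integrableOn_cornerSimplex_of_continuous {ι : Type*} [Fintype ι] {f : (ι → ℝ) → ℝ}
    (hf : Continuous f) (u : ℝ) : IntegrableOn f (cornerSimplex ι u) :=
  hf.continuousOn.integrableOn_compact (isCompact_cornerSimplex ι u)

theorem cons_mem_cornerSimplex_iff {n : ℕ} {u a : ℝ} {z : Fin n → ℝ} :
    Fin.cons a z ∈ cornerSimplex (Fin (n + 1)) u ↔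
      a ∈ Set.Icc 0 u ∧ z ∈ cornerSimplex (Fin n) (u - a) := by
  simp only [cornerSimplex, Set.mem_ofPred_eq, Fin.forall_fin_succ, Fin.sum_univ_succ,
    Fin.cons_zero, Fin.cons_succ, Set.mem_Icc]
  constructor
  · rintro ⟨⟨ha, hz⟩, hsum⟩
    have := Finset.sum_nonneg fun i (_ : i ∈ Finset.univ) => hz i
    exact ⟨⟨ha, by linarith⟩, hz, by linarith⟩
  · rintro ⟨⟨ha, -⟩, hz, hsum⟩
    exact ⟨⟨ha, hz⟩, by linarith⟩

section Slicing

variable {n : ℕ} {E : Type*} [NormedAddCommGroup E] [NormedSpace ℝ E] {f : (Fin (n + 1) → ℝ) → E}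

theorem integral_fin_succ_eq_integral_cons (hf : Integrable f) :
    ∫ y, f y = ∫ a, ∫ z : Fin n → ℝ, f (Fin.cons a z) := by
  have split := (volume_preserving_piFinSuccAbove (fun _ : Fin (n + 1) => ℝ) 0).symm
  have cons_eq (q : ℝ × (Fin n → ℝ)) :
      (MeasurableEquiv.piFinSuccAbove (fun _ : Fin (n + 1) => ℝ) 0).symm q = Fin.cons q.1 q.2 := by
    simp [MeasurableEquiv.piFinSuccAbove, Fin.consEquiv]
  have hf' := (split.integrable_comp_emb (MeasurableEquiv.measurableEmbedding _)).2 hf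
  simp only [Function.comp_def, cons_eq] at hf'
  rw [← split.integral_comp']
  simp only [cons_eq]
  exact integral_prod _ hf'

theorem setIntegral_cornerSimplex_succ {u : ℝ} (hu : 0 ≤ u)
    (hf : IntegrableOn f (cornerSimplex (Fin (n + 1)) u)) :
    ∫ y in cornerSimplex (Fin (n + 1)) u, f y =
      ∫ a in (0 : ℝ)..u, ∫ z in cornerSimplex (Fin n) (u - a), f (Fin.cons a z) := by
  have measurable (k : ℕ) (v : ℝ) : MeasurableSet (cornerSimplex (Fin k) v) :=
    (isCompact_cornerSimplex _ _).measurableSet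
  rw [← integral_indicator (measurable _ _),
    integral_fin_succ_eq_integral_cons ((integrable_indicator_iff (measurable _ _)).2 hf),
    intervalIntegral.integral_of_le hu, ← integral_Icc_eq_integral_Ioc,
    ← integral_indicator measurableSet_Icc]
  classical
  congr 1 with a
  by_cases ha : a ∈ Set.Icc 0 u
  · rw [Set.indicator_of_mem ha, ← integral_indicator (measurable _ _)]
    simp only [Set.indicator_apply, cons_mem_cornerSimplex_iff, ha, true_and]
  · simp only [Set.indicator_apply, cons_mem_cornerSimplex_iff, ha, false_and, if_false,
      integral_zero]

end Slicing

theorem integral_cornerSimplex_prod_pow_mul_sub_sum_pow {n : ℕ} (p : Fin n → ℕ) (q : ℕ) {u : ℝ}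
    (hu : 0 ≤ u) :
    ∫ y in cornerSimplex (Fin n) u, (∏ i, y i ^ p i) * (u - ∑ i, y i) ^ q =
      ((∏ i, (p i)! : ℕ) * q ! / (∑ i, p i + q + n)! : ℝ) * u ^ (∑ i, p i + q + n) := by
  induction n generalizing u with
  | zero =>
    have : cornerSimplex (Fin 0) u = Set.univ := by simp [cornerSimplex, hu]
    simp [this, Nat.factorial_ne_zero, measureReal_def, volume_pi]
  | succ n ih =>
    set K := ∑ i, p (Fin.succ i) + q + n
    set C : ℝ := (∏ i, (p (Fin.succ i))! : ℕ) * q ! / K ! with hC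
    have slice : ∀ a ∈ Set.uIcc 0 u,
        ∫ z in cornerSimplex (Fin n) (u - a), (∏ i, (Fin.cons a z : Fin (n + 1) → ℝ) i ^ p i) *
          (u - ∑ i, (Fin.cons a z : Fin (n + 1) → ℝ) i) ^ q = C * (a ^ p 0 * (u - a) ^ K) := by
      intro a ha
      rw [Set.uIcc_of_le hu] at ha
      simp only [Fin.prod_univ_succ, Fin.sum_univ_succ, Fin.cons_zero, Fin.cons_succ, mul_assoc,
        ← sub_sub, integral_const_mul]
      rw [ih (fun i => p i.succ) (sub_nonneg.2 ha.2)]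
      ring
    rw [setIntegral_cornerSimplex_succ hu
        (integrableOn_cornerSimplex_of_continuous (by fun_prop) u),
      intervalIntegral.integral_congr slice, intervalIntegral.integral_const_mul,
      integral_pow_mul_sub_pow, Fin.sum_univ_succ, Fin.prod_univ_succ, hC,
      show p 0 + ∑ i, p (Fin.succ i) + q + (n + 1) = p 0 + K + 1 by simp only [K]; ring]
    have := Nat.cast_ne_zero (R := ℝ).2 K.factorial_ne_zero
    push_cast
    field_simp

end DirichletIntegral

section Simplex

open scoped Nat

theorem simplexSet_eq_cornerSimplex : simplexSet = cornerSimplex (Fin 3) 1 := by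
  simp only [simplexSet, cornerSimplex, Fin.sum_univ_three]

theorem measurableSet_simplexSet : MeasurableSet simplexSet :=
  simplexSet_eq_cornerSimplex ▸ (isCompact_cornerSimplex (Fin 3) 1).measurableSet

theorem integrableOn_simplexSet_of_continuous {f : (Fin 3 → ℝ) → ℝ} (hf : Continuous f) :
    IntegrableOn f simplexSet :=
  simplexSet_eq_cornerSimplex ▸ integrableOn_cornerSimplex_of_continuous hf 1

@[fun_prop]
theorem continuous_simplexCoord : Continuous simplexCoord := by
  refine continuous_pi fun i => ?_
  fin_cases i <;> dsimp [simplexCoord] <;> fun_prop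

theorem sum_simplexCoord (y : Fin 3 → ℝ) : ∑ i, simplexCoord y i = 1 := by
  simp [Fin.sum_univ_four, simplexCoord]

theorem simplexCoord_nonneg {y : Fin 3 → ℝ} (hy : y ∈ simplexSet) (i : Fin 4) :
    0 ≤ simplexCoord y i := by
  obtain ⟨hpos, hsum⟩ := hy
  fin_cases i
  · exact hpos 0
  · exact hpos 1
  · exact hpos 2
  · change 0 ≤ 1 - y 0 - y 1 - y 2
    linarith

theorem integral_simplexSet_prod_simplexCoord_pow (p : Fin 4 → ℕ) :
    ∫ y in simplexSet, ∏ i, simplexCoord y i ^ p i = (∏ i, (p i)! : ℕ) / (∑ i, p i + 3)! := by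
  have dirichlet := integral_cornerSimplex_prod_pow_mul_sub_sum_pow
    (fun i : Fin 3 => p i.castSucc) (p 3) zero_le_one
  have coord_castSucc (y : Fin 3 → ℝ) (i : Fin 3) : simplexCoord y i.castSucc = y i := by
    fin_cases i <;> rfl
  have coord_last (y : Fin 3 → ℝ) : simplexCoord y 3 = 1 - ∑ i, y i := by
    rw [Fin.sum_univ_three, ← sub_sub, ← sub_sub]
    rfl
  rw [one_pow, mul_one, ← simplexSet_eq_cornerSimplex] at dirichlet
  simpa only [Fin.prod_univ_castSucc (n := 3), Fin.sum_univ_castSucc (n := 3), Fin.reduceLast,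
    coord_castSucc, coord_last, Nat.cast_mul] using dirichlet

theorem integral_simplexSet_const (c : ℝ) : ∫ _ in simplexSet, c = c / 6 := by
  have volume_eq : volume.real simplexSet = 1 / 6 := by
    simpa [Nat.factorial] using integral_simplexSet_prod_simplexCoord_pow 0
  rw [setIntegral_const, volume_eq, smul_eq_mul]
  ring

theorem integral_simplexSet_simplexCoord_sq (i : Fin 4) :
    ∫ y in simplexSet, simplexCoord y i ^ 2 = 1 / 60 := by
  have single (y : Fin 3 → ℝ) :
      ∏ j, simplexCoord y j ^ (Pi.single i 2 : Fin 4 → ℕ) j = simplexCoord y i ^ 2 := by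
    rw [Finset.prod_eq_single i (fun j _ hj => by simp [hj]) (by simp), Pi.single_eq_same]
  have factorials : ∏ j, ((Pi.single i 2 : Fin 4 → ℕ) j)! = 2 := by
    rw [Finset.prod_eq_single i (fun j _ hj => by simp [hj]) (by simp), Pi.single_eq_same]
    rfl
  have moment := integral_simplexSet_prod_simplexCoord_pow (Pi.single i 2)
  simp only [single, factorials, Finset.sum_pi_single', Finset.mem_univ, if_true] at moment
  rw [moment]
  norm_num [Nat.factorial]

theorem integral_simplexSet_const_add_mul_sum_sq (a b : ℝ) :
    ∫ y in simplexSet, (a + b * ∑ i, simplexCoord y i ^ 2) = a / 6 + b / 15 := by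
  have integrable_sq (i : Fin 4) : IntegrableOn (fun y => simplexCoord y i ^ 2) simplexSet :=
    integrableOn_simplexSet_of_continuous (by fun_prop)
  rw [integral_add (integrableOn_simplexSet_of_continuous continuous_const)
      (integrableOn_simplexSet_of_continuous (by fun_prop)),
    integral_simplexSet_const, integral_const_mul, integral_finsetSum _ fun i _ => integrable_sq i]
  simp only [integral_simplexSet_simplexCoord_sq, Finset.sum_const, Finset.card_univ,
    Fintype.card_fin]
  ring

end Simplex

section PauliParameters

@[fun_prop]
theorem continuous_pauliParams : Continuous pauliParams := by
  refine continuous_pi fun j => ?_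
  fin_cases j <;> dsimp [pauliParams] <;> fun_prop

theorem pauliParams_sub (θ θ' : Fin 4 → ℝ) :
    pauliParams (θ - θ') = pauliParams θ - pauliParams θ' := by
  ext j
  fin_cases j <;> dsimp [pauliParams] <;> ring

/-- Parseval's identity for the `4 × 4` Hadamard matrix. -/
theorem sum_pauliParams_sq_add_sq_sum (θ : Fin 4 → ℝ) :
    ∑ j, pauliParams θ j ^ 2 + (∑ i, θ i) ^ 2 = 4 * ∑ i, θ i ^ 2 := by
  simp only [Fin.sum_univ_three, Fin.sum_univ_four, pauliParams, Matrix.cons_val]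
  ring

theorem pauliParams_mem_Icc {θ : Fin 4 → ℝ} (hθ : ∀ i, 0 ≤ θ i) (hsum : ∑ i, θ i = 1)
    (j : Fin 3) : pauliParams θ j ∈ Set.Icc (-1) 1 := by
  have h0 := hθ 0
  have h1 := hθ 1
  have h2 := hθ 2
  have h3 := hθ 3
  rw [Fin.sum_univ_four] at hsum
  fin_cases j <;> simp only [pauliParams, Set.mem_Icc] <;> dsimp <;> constructor <;> linarith

/-- The eigenvalues of the Bell diagonal operator of unit trace with Pauli parameters `t`; they may
be negative when `t` lies outside the physical tetrahedron. -/
noncomputable def eigenvaluesOfPauli (t : Fin 3 → ℝ) : Fin 4 → ℝ :=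
  ![(1 + t 0 - t 1 + t 2) / 4, (1 - t 0 + t 1 + t 2) / 4, (1 + t 0 + t 1 - t 2) / 4,
    (1 - t 0 - t 1 - t 2) / 4]

theorem sum_eigenvaluesOfPauli (t : Fin 3 → ℝ) : ∑ i, eigenvaluesOfPauli t i = 1 := by
  simp only [Fin.sum_univ_four, eigenvaluesOfPauli, Matrix.cons_val]
  ring

theorem pauliParams_eigenvaluesOfPauli (t : Fin 3 → ℝ) :
    pauliParams (eigenvaluesOfPauli t) = t := by
  ext j
  fin_cases j <;> dsimp [pauliParams, eigenvaluesOfPauli] <;> ring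

theorem sum_eigenvaluesOfPauli_sub_sq (t : Fin 3 → ℝ) {θ : Fin 4 → ℝ} (hsum : ∑ i, θ i = 1) :
    ∑ i, (eigenvaluesOfPauli t i - θ i) ^ 2 = 1 / 4 * ∑ j, (t j - pauliParams θ j) ^ 2 := by
  have parseval := sum_pauliParams_sq_add_sq_sum (eigenvaluesOfPauli t - θ)
  simp only [pauliParams_sub, pauliParams_eigenvaluesOfPauli, Pi.sub_apply, Finset.sum_sub_distrib,
    sum_eigenvaluesOfPauli, hsum] at parseval
  linarith

end PauliParameters

section ParityChecks

/-- Probability of `k` even-parity outcomes among `m` parity checks in a basis with Pauli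
parameter `t`. -/
noncomputable def parityProb (m : ℕ) (t : ℝ) (k : ℕ) : ℝ :=
  (m.choose k : ℝ) * ((1 + t) / 2) ^ k * ((1 - t) / 2) ^ (m - k)

theorem parityLikelihood_eq_prod_parityProb (m : ℕ) (x : Fin 3 → Fin (m + 1)) (θ : Fin 4 → ℝ) :
    parityLikelihood m x θ = ∏ i, parityProb m (pauliParams θ i) (x i) :=
  rfl

theorem parityProb_eq_eval_bernsteinPolynomial (m : ℕ) (t : ℝ) (k : ℕ) :
    parityProb m t k = (bernsteinPolynomial ℝ m k).eval ((1 + t) / 2) := by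
  have : (1 - t) / 2 = 1 - (1 + t) / 2 := by ring
  simp [parityProb, bernsteinPolynomial, this]

theorem parityProb_nonneg {t : ℝ} (ht : t ∈ Set.Icc (-1) 1) (m k : ℕ) : 0 ≤ parityProb m t k := by
  have h_even : 0 ≤ (1 + t) / 2 := by linarith [ht.1]
  have h_odd : 0 ≤ (1 - t) / 2 := by linarith [ht.2]
  unfold parityProb
  positivity

theorem sum_parityProb (m : ℕ) (t : ℝ) : ∑ k : Fin (m + 1), parityProb m t k = 1 := by
  rw [← Finset.sum_range]
  simp only [parityProb_eq_eval_bernsteinPolynomial, ← Polynomial.eval_finsetSum,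
    bernsteinPolynomial.sum, Polynomial.eval_one]

/-- The adjusted Bayesian mean estimate of a Pauli parameter after `k` even-parity outcomes among
`m` parity checks. -/
noncomputable def adjustedEstimate (m k : ℕ) : ℝ :=
  (2 * k - m) / (m + 2)

theorem sum_parityProb_mul_adjustedEstimate_sub_sq (m : ℕ) (t : ℝ) :
    ∑ k ∈ Finset.range (m + 1), parityProb m t k * (adjustedEstimate m k - t) ^ 2 =
      (m * (1 - t ^ 2) + 4 * t ^ 2) / (m + 2) ^ 2 := by
  have affine (k : ℕ) : adjustedEstimate m k - t = 2 / (m + 2) * k + (-m / (m + 2) - t) := by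
    unfold adjustedEstimate
    ring
  simp only [affine, parityProb_eq_eval_bernsteinPolynomial,
    sum_bernsteinPolynomial_eval_mul_affine_sq]
  field_simp
  ring

theorem hilbertSchmidtRisk_adjustedEstimate {θ : Fin 4 → ℝ} (hsum : ∑ i, θ i = 1) (m : ℕ) :
    1 / 4 * ∑ j, ∑ k ∈ Finset.range (m + 1), parityProb m (pauliParams θ j) k *
        (adjustedEstimate m k - pauliParams θ j) ^ 2 =
      (m - 1 + (4 - m) * ∑ i, θ i ^ 2) / (m + 2) ^ 2 := by
  have purity : ∑ j, pauliParams θ j ^ 2 = 4 * ∑ i, θ i ^ 2 - 1 := by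
    rw [← sum_pauliParams_sq_add_sq_sum, hsum]
    ring
  simp only [sum_parityProb_mul_adjustedEstimate_sub_sq, ← Finset.sum_div, Finset.sum_add_distrib,
    ← Finset.mul_sum, Finset.sum_sub_distrib, purity]
  simp only [Finset.sum_const, Finset.card_univ, Fintype.card_fin]
  ring

/-- The adjusted Bayesian mean estimator as an estimator of the eigenvalues. -/
noncomputable def adjustedEigenvalues (m : ℕ) (x : Fin 3 → Fin (m + 1)) : Fin 4 → ℝ :=
  eigenvaluesOfPauli fun j => adjustedEstimate m (x j)

theorem sum_parityLikelihood_mul_adjustedEigenvalues_sub_sq {θ : Fin 4 → ℝ}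
    (hsum : ∑ i, θ i = 1) (m : ℕ) :
    ∑ x, parityLikelihood m x θ * ∑ i, (adjustedEigenvalues m x i - θ i) ^ 2 =
      (m - 1 + (4 - m) * ∑ i, θ i ^ 2) / (m + 2) ^ 2 := by
  rw [← hilbertSchmidtRisk_adjustedEstimate hsum]
  simp only [adjustedEigenvalues, sum_eigenvaluesOfPauli_sub_sq _ hsum,
    parityLikelihood_eq_prod_parityProb, mul_left_comm _ (1 / 4 : ℝ), ← Finset.mul_sum,
    Finset.sum_range]
  rw [sum_prod_mul_sum_apply_eq (w := fun j (k : Fin (m + 1)) => parityProb m (pauliParams θ j) k)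
    (fun j => sum_parityProb m _)
    (fun j (k : Fin (m + 1)) => (adjustedEstimate m k - pauliParams θ j) ^ 2)]

theorem parityLikelihood_simplexCoord_nonneg (m : ℕ) (x : Fin 3 → Fin (m + 1)) {y : Fin 3 → ℝ}
    (hy : y ∈ simplexSet) : 0 ≤ parityLikelihood m x (simplexCoord y) :=
  Finset.prod_nonneg fun j _ => parityProb_nonneg
    (pauliParams_mem_Icc (simplexCoord_nonneg hy) (sum_simplexCoord y) j) m (x j)

@[fun_prop]
theorem continuous_parityLikelihood (m : ℕ) (x : Fin 3 → Fin (m + 1)) :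
    Continuous (parityLikelihood m x) := by
  unfold parityLikelihood
  fun_prop

end ParityChecks

section AverageRisk

/-- The average over the uniform prior of the Hilbert–Schmidt risk of the estimator `est` of the
eigenvalues; the factor `6` normalizes Lebesgue measure on `simplexSet`. -/
noncomputable def averageRisk (m : ℕ) (est : (Fin 3 → Fin (m + 1)) → Fin 4 → ℝ) : ℝ :=
  ∫ y in simplexSet, 6 * ∑ x, parityLikelihood m x (simplexCoord y) *
    ∑ i, (est x i - simplexCoord y i) ^ 2

theorem averageRisk_eq_sum (m : ℕ) (est : (Fin 3 → Fin (m + 1)) → Fin 4 → ℝ) :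
    averageRisk m est = 6 * ∑ x, ∑ i, ∫ y in simplexSet,
      parityLikelihood m x (simplexCoord y) * (est x i - simplexCoord y i) ^ 2 := by
  have integrable (x i) : IntegrableOn (fun y => parityLikelihood m x (simplexCoord y) *
      (est x i - simplexCoord y i) ^ 2) simplexSet :=
    integrableOn_simplexSet_of_continuous (by fun_prop)
  rw [averageRisk, integral_const_mul]
  simp only [Finset.mul_sum (s := Finset.univ (α := Fin 4))]
  rw [integral_finsetSum _ fun x _ => integrable_finsetSum _ fun i _ => integrable x i]
  simp only [integral_finsetSum _ fun i _ => integrable _ i, Finset.mul_sum]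

theorem averageRisk_bmeEstimate_le (m : ℕ) (est : (Fin 3 → Fin (m + 1)) → Fin 4 → ℝ) :
    averageRisk m (bmeEstimate m) ≤ averageRisk m est := by
  rw [averageRisk_eq_sum, averageRisk_eq_sum]
  gcongr 6 * ∑ x, ∑ i, ?_ with x _ i _
  exact integral_mul_weightedMean_sub_sq_le
    (ae_restrict_of_forall_mem measurableSet_simplexSet
      fun y hy => parityLikelihood_simplexCoord_nonneg m x hy)
    (integrableOn_simplexSet_of_continuous (by fun_prop))
    (integrableOn_simplexSet_of_continuous (by fun_prop))
    (integrableOn_simplexSet_of_continuous (by fun_prop)) (est x i)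

theorem integral_hilbertSchmidtRisk_adjustedEstimate (m : ℕ) :
    ∫ y in simplexSet, 6 * (((m : ℝ) - 1 + (4 - m) * ∑ i, simplexCoord y i ^ 2) / (m + 2) ^ 2) =
      (3 * m + 3 : ℝ) / (5 * (m + 2) ^ 2) := by
  rw [integral_const_mul, integral_div, integral_simplexSet_const_add_mul_sum_sq]
  field_simp
  ring

theorem averageRisk_adjustedEigenvalues (m : ℕ) :
    averageRisk m (adjustedEigenvalues m) = (3 * m + 3) / (5 * (m + 2) ^ 2) := by
  simp only [averageRisk, sum_parityLikelihood_mul_adjustedEigenvalues_sub_sq (sum_simplexCoord _),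
    integral_hilbertSchmidtRisk_adjustedEstimate]

end AverageRisk

theorem risk_adjusted_bme_ordered_parity_checks_general
    (N m : ℕ) (hN : N = 3 * m)
    (θ : Fin 4 → ℝ) (hsum : ∑ i, θ i = 1)
    (t : Fin 3 → ℝ)
    (ht1 : t 0 = θ 0 - θ 1 + θ 2 - θ 3)
    (ht2 : t 1 = -θ 0 + θ 1 + θ 2 - θ 3)
    (ht3 : t 2 = θ 0 + θ 1 - θ 2 - θ 3) :
    ((1/4 : ℝ) * ∑ i : Fin 3, ∑ x ∈ Finset.range (m + 1),
        ((m.choose x : ℝ) * ((1 + t i) / 2) ^ x * ((1 - t i) / 2) ^ (m - x)) *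
          ((2 * (x : ℝ) - m) / ((m : ℝ) + 2) - t i) ^ 2
      = ((m : ℝ) - 1 + (4 - (m : ℝ)) * ∑ i, θ i ^ 2) / ((m : ℝ) + 2) ^ 2)
    ∧ (∫ y in simplexSet,
          6 * (((m : ℝ) - 1 + (4 - (m : ℝ)) * ∑ i : Fin 4, simplexCoord y i ^ 2) /
            ((m : ℝ) + 2) ^ 2)
        = ((N : ℝ) + 3) / (5 * ((m : ℝ) + 2) ^ 2))
    ∧ (∫ y in simplexSet,
          6 * ∑ x : Fin 3 → Fin (m + 1), parityLikelihood m x (simplexCoord y) *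
            ∑ i : Fin 4, (bmeEstimate m x i - simplexCoord y i) ^ 2
        ≤ ((N : ℝ) + 3) / (5 * ((m : ℝ) + 2) ^ 2)) := by
  obtain rfl : t = pauliParams θ := by
    ext j
    fin_cases j
    exacts [ht1, ht2, ht3]
  have hN' : (N : ℝ) = 3 * m := by exact_mod_cast hN
  rw [hN']
  exact ⟨hilbertSchmidtRisk_adjustedEstimate hsum m,
    integral_hilbertSchmidtRisk_adjustedEstimate m,
    (averageRisk_bmeEstimate_le m (adjustedEigenvalues m)).trans_eq
      (averageRisk_adjustedEigenvalues m)⟩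

/-- For `N = 3m` ordered Pauli parity checks with `Xᵢ ~ Bin(m, (1+tᵢ)/2)` and the adjusted
Bayesian mean estimator `t̂ᵢ = (2Xᵢ−m)/(m+2)`:
(a) the Hilbert–Schmidt risk `(1/4)Σᵢ E[(t̂ᵢ−tᵢ)²]` equals `[m−1+(4−m)Σθᵢ²]/(m+2)²`;
(b) its average over the uniform prior on the simplex equals `(N+3)/(5(m+2)²)`;
(c) this value upper-bounds the average Hilbert–Schmidt risk of the (true) Bayesian mean
estimator for `N` ordered Pauli parity checks under the uniform prior. -/
theorem risk_adjusted_bme_ordered_parity_checks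
    (N m : ℕ) (hm : 1 ≤ m) (hN : N = 3 * m)
    (θ : Fin 4 → ℝ) (hθ : ∀ i, 0 ≤ θ i) (hsum : ∑ i, θ i = 1)
    (t : Fin 3 → ℝ)
    (ht1 : t 0 = θ 0 - θ 1 + θ 2 - θ 3)
    (ht2 : t 1 = -θ 0 + θ 1 + θ 2 - θ 3)
    (ht3 : t 2 = θ 0 + θ 1 - θ 2 - θ 3) :
    ((1/4 : ℝ) * ∑ i : Fin 3, ∑ x ∈ Finset.range (m + 1),
        ((m.choose x : ℝ) * ((1 + t i) / 2) ^ x * ((1 - t i) / 2) ^ (m - x)) *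
          ((2 * (x : ℝ) - m) / ((m : ℝ) + 2) - t i) ^ 2
      = ((m : ℝ) - 1 + (4 - (m : ℝ)) * ∑ i, θ i ^ 2) / ((m : ℝ) + 2) ^ 2)
    ∧ (∫ y in simplexSet,
          6 * (((m : ℝ) - 1 + (4 - (m : ℝ)) * ∑ i : Fin 4, simplexCoord y i ^ 2) /
            ((m : ℝ) + 2) ^ 2)
        = ((N : ℝ) + 3) / (5 * ((m : ℝ) + 2) ^ 2))
    ∧ (∫ y in simplexSet,
          6 * ∑ x : Fin 3 → Fin (m + 1), parityLikelihood m x (simplexCoord y) *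
            ∑ i : Fin 4, (bmeEstimate m x i - simplexCoord y i) ^ 2
        ≤ ((N : ℝ) + 3) / (5 * ((m : ℝ) + 2) ^ 2)) :=
  risk_adjusted_bme_ordered_parity_checks_general N m hN θ hsum t ht1 ht2 ht3
end
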